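/- Let S be the kernel built from a(k) = −k² log|k| (with a(0) = 0). There exists a constant C₂ > 0 such that for all nonzero integers k₁, k₂, k₃, k₄ with k₁ + k₂ + k₃ + k₄ = 0, one has |S(k₁, k₂, k₃, k₄)| ≤ C₂ |m₃| |m₄| [log(1 + |m₁|) log(1 + |m₂|)]^{1/2}, where (m₁, m₂, m₃, m₄) is a permutation of (k₁, k₂, k₃, k₄) with |m₁| ≥ |m₂| ≥ |m₃| ≥ |m₄|. -/

import Mathlib

/-!
When `k₁ + k₂ + k₃ + k₄ = 0` and `a` is even, the kernel is a third-order difference: with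
`x = m₂`, `y = m₃`, `z = m₄`,
`S = a(x+y+z) - a(x+y) - a(x+z) - a(y+z) + a(x) + a(y) + a(z)`.
Setting `h(w) = a(w+z) - a(w)`, this is `(h(x+y) - h(x)) - (h(y) - h(0))`, so by the mean value
inequality `|S| ≤ 2|y| sup |h'|`, the supremum being over `|w| ≤ 2|x|`. Here
`h'(w) = a'(w+z) - a'(w)` and `a'(t) = -(2 t log t + t)`, so everything reduces to a modulus of
continuity for `t ↦ t log t` (`abs_mul_log_sub_le`): on `[-M, M]`, increments over steps of length
at least `1` are at most the step times `log M + 2`. The restriction to steps of length at least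
`1` hides the logarithmic singularity of `a''` at the origin; it applies since `z` is a nonzero
integer. Finally `log (1 + |m₂|) ≤ √(log (1 + |m₁|) log (1 + |m₂|))`, and the additive constants
are absorbed because `log (1 + |m₂|) ≥ log 2`.
-/

/-- `a(k) = −k² log|k|` (with `a(0) = 0`, since `Real.log 0 = 0`). -/
noncomputable def aLog (t : ℝ) : ℝ := -t ^ 2 * Real.log |t|

/-- The kernel `S` built from a function `a`:
`S(k₁,k₂,k₃,k₄) = Σ a(kᵢ) − (1/2) Σ_{i<j} a(kᵢ+kⱼ)`. -/
noncomputable def Sker (a : ℝ → ℝ) (k₁ k₂ k₃ k₄ : ℝ) : ℝ :=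
  a k₁ + a k₂ + a k₃ + a k₄ -
    (1 / 2) * (a (k₁ + k₂) + a (k₁ + k₃) + a (k₁ + k₄) +
      a (k₂ + k₃) + a (k₂ + k₄) + a (k₃ + k₄))


lemma aLog_neg (t : ℝ) : aLog (-t) = aLog t := by
  simp [aLog]

/-- The origin is included: there the formula gives `0` because `Real.log 0 = 0`, and the
difference quotient `-t log t` tends to `0`. -/
lemma hasDerivAt_aLog (t : ℝ) : HasDerivAt aLog (-(2 * (t * Real.log t) + t)) t := by
  have hf : aLog = fun t => -t ^ 2 * Real.log t := by
    funext t; simp [aLog]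
  rw [hf]
  rcases eq_or_ne t 0 with rfl | ht
  · rw [hasDerivAt_iff_tendsto_slope_zero]
    have h1 : Filter.Tendsto (fun t : ℝ => -(t * Real.log t)) (nhdsWithin 0 {0}ᶜ) (nhds 0) := by
      have := (Real.continuous_mul_log.neg.tendsto (0 : ℝ)).mono_left
        (nhdsWithin_le_nhds (s := {0}ᶜ))
      simpa [Pi.neg_def] using this
    simp only [zero_mul, mul_zero, add_zero, neg_zero]
    refine h1.congr' ?_
    filter_upwards [self_mem_nhdsWithin] with t ht
    have ht : t ≠ 0 := ht
    simp
    field_simp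
  · have h := ((hasDerivAt_pow 2 t).neg).mul (Real.hasDerivAt_log ht)
    refine h.congr_deriv ?_
    simp
    field_simp
    ring

lemma abs_mul_log_le {t M : ℝ} (ht : 0 ≤ t) (htM : t ≤ M) (hM : 1 ≤ M) :
    |t * Real.log t| ≤ t * Real.log M + 1 := by
  have hlM : 0 ≤ Real.log M := Real.log_nonneg hM
  rcases ht.eq_or_lt with rfl | ht
  · simp
  · have h1 : Real.log t ≤ Real.log M := Real.log_le_log ht htM
    have h2 := Real.one_sub_inv_le_log_of_pos ht
    have h3 : t * (1 - t⁻¹) = t - 1 := by field_simp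
    rw [abs_le]
    constructor
    · nlinarith [mul_le_mul_of_nonneg_left h2 ht.le, mul_nonneg ht.le hlM]
    · nlinarith

lemma abs_mul_log_sub_le_of_nonneg {a b M : ℝ} (ha : 0 ≤ a) (hab : 1 ≤ b - a) (hb : b ≤ M) :
    |b * Real.log b - a * Real.log a| ≤ (b - a) * (Real.log M + 2) := by
  have hb1 : 1 ≤ b := by linarith
  have hlb : 0 ≤ Real.log b := Real.log_nonneg hb1
  have h1 : Real.log b ≤ Real.log M := Real.log_le_log (by linarith) hb
  rcases ha.eq_or_lt with rfl | ha
  · rw [abs_le]; constructor <;> simp <;> nlinarith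
  · have h2 : a * (Real.log b - Real.log a) ≤ b - a := by
      have h := Real.log_le_sub_one_of_pos (show 0 < b / a by positivity)
      rw [Real.log_div (by linarith) (by linarith)] at h
      have h' := mul_le_mul_of_nonneg_left h ha.le
      have : a * (b / a - 1) = b - a := by field_simp
      linarith
    have h3 : Real.log a ≤ Real.log b := Real.log_le_log ha (by linarith)
    rw [abs_le]; constructor <;> nlinarith

/-- Modulus of continuity of `t ↦ t log t` at scales at least `1`. -/
lemma abs_mul_log_sub_le {a b M : ℝ} (hab : 1 ≤ |b - a|) (ha : |a| ≤ M) (hb : |b| ≤ M)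
    (hM : 1 ≤ M) :
    |b * Real.log b - a * Real.log a| ≤ |b - a| * (Real.log M + 2) := by
  wlog h : a ≤ b generalizing a b
  · have := this (by rwa [abs_sub_comm]) hb ha (by linarith)
    rwa [abs_sub_comm, abs_sub_comm b a]
  rw [abs_of_nonneg (by linarith : 0 ≤ b - a)] at hab ⊢
  rw [abs_le] at ha hb
  rcases le_total 0 a with ha0 | ha0
  · exact abs_mul_log_sub_le_of_nonneg ha0 hab hb.2
  rcases le_total b 0 with hb0 | hb0
  · have := abs_mul_log_sub_le_of_nonneg (a := -b) (b := -a) (M := M)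
      (by linarith) (by linarith) (by linarith)
    simp only [Real.log_neg_eq_log] at this
    convert this using 2 <;> ring
  · -- opposite signs: the two increments from the origin add up, and `b - a = |b| + |a|`
    have h1 := abs_mul_log_le hb0 hb.2 hM
    have h2 := abs_mul_log_le (t := -a) (M := M) (by linarith) (by linarith) hM
    rw [Real.log_neg_eq_log] at h2
    rw [abs_le] at h1 h2 ⊢
    constructor <;> nlinarith

/-- The third-order difference of `aLog` based at the origin. -/
lemma abs_third_diff_le {x y z : ℝ} (hyx : |y| ≤ |x|) (hzy : |z| ≤ |y|) (hz : 1 ≤ |z|) :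
    |(aLog (x + y + z) - aLog (x + y)) - (aLog (x + z) - aLog x)
      - ((aLog (y + z) - aLog y) - (aLog (0 + z) - aLog 0))|
      ≤ 2 * |y| * |z| * (2 * Real.log (3 * |x|) + 5) := by
  set B := |z| * (2 * Real.log (3 * |x|) + 5) with hB
  have hderiv : ∀ w ∈ Set.Icc (-(2 * |x|)) (2 * |x|),
      HasDerivWithinAt (fun w => aLog (w + z) - aLog w)
        (-(2 * ((w + z) * Real.log (w + z)) + (w + z)) - -(2 * (w * Real.log w) + w))
        (Set.Icc (-(2 * |x|)) (2 * |x|)) w := fun w _ =>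
    (((hasDerivAt_aLog (w + z)).comp_add_const w z).sub (hasDerivAt_aLog w)).hasDerivWithinAt
  have hbound : ∀ w ∈ Set.Icc (-(2 * |x|)) (2 * |x|),
      ‖-(2 * ((w + z) * Real.log (w + z)) + (w + z)) - -(2 * (w * Real.log w) + w)‖ ≤ B := by
    intro w hw
    have hw' : |w| ≤ 2 * |x| := abs_le.2 hw
    have h := abs_mul_log_sub_le (a := w) (b := w + z) (M := 3 * |x|) (by simpa using hz)
      (by linarith) ((abs_add_le w z).trans (by linarith)) (by linarith)
    rw [add_sub_cancel_left] at h
    rw [Real.norm_eq_abs, hB]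
    calc _ = |-(2 * ((w + z) * Real.log (w + z) - w * Real.log w) + z)| := by ring_nf
      _ ≤ 2 * |(w + z) * Real.log (w + z) - w * Real.log w| + |z| := by
          rw [abs_neg]
          refine (abs_add_le _ _).trans ?_
          rw [abs_mul, abs_two]
      _ ≤ _ := by linarith
  have hx2 := abs_nonneg x
  have mem : ∀ w, |w| ≤ 2 * |x| → w ∈ Set.Icc (-(2 * |x|)) (2 * |x|) := fun w hw => abs_le.1 hw
  have h1 := (convex_Icc _ _).norm_image_sub_le_of_norm_hasDerivWithin_le hderiv hbound
    (mem x (by linarith)) (mem (x + y) ((abs_add_le x y).trans (by linarith)))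
  have h2 := (convex_Icc _ _).norm_image_sub_le_of_norm_hasDerivWithin_le hderiv hbound
    (mem 0 (by simp)) (mem y (by linarith))
  simp only [Real.norm_eq_abs, add_sub_cancel_left, sub_zero] at h1 h2
  refine (abs_sub _ _).trans ((add_le_add h1 h2).trans (le_of_eq ?_))
  rw [hB]; ring

/-- The kernel as a function of the multiset of its arguments; this makes its symmetry evident.
The double sum runs over all ordered pairs, diagonal included. -/
lemma Sker_eq_multiset (a : ℝ → ℝ) (k₁ k₂ k₃ k₄ : ℤ) :
    Sker a k₁ k₂ k₃ k₄ =
      (({k₁, k₂, k₃, k₄} : Multiset ℤ).map fun i : ℤ => a i + (1 / 4) * a ((i : ℝ) + i)).sum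
      - (1 / 4) * (({k₁, k₂, k₃, k₄} : Multiset ℤ).map fun i : ℤ =>
          (({k₁, k₂, k₃, k₄} : Multiset ℤ).map fun j : ℤ => a ((i : ℝ) + j)).sum).sum := by
  simp only [Sker, Multiset.insert_eq_cons, Multiset.map_cons, Multiset.map_singleton,
    Multiset.sum_cons, Multiset.sum_singleton]
  rw [add_comm (k₂ : ℝ) k₁, add_comm (k₃ : ℝ) k₁, add_comm (k₄ : ℝ) k₁, add_comm (k₃ : ℝ) k₂,
    add_comm (k₄ : ℝ) k₂, add_comm (k₄ : ℝ) k₃]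
  ring

lemma Sker_aLog_eq_third_diff {w x y z : ℝ} (h : w + x + y + z = 0) :
    Sker aLog w x y z =
      (aLog (x + y + z) - aLog (x + y)) - (aLog (x + z) - aLog x)
      - ((aLog (y + z) - aLog y) - (aLog (0 + z) - aLog 0)) := by
  have e0 : w = -(x + y + z) := by linarith
  have e1 : w + x = -(y + z) := by linarith
  have e2 : w + y = -(x + z) := by linarith
  have e3 : w + z = -(x + y) := by linarith
  have h0 : aLog 0 = 0 := by simp [aLog]
  rw [Sker, e1, e2, e3, e0]
  simp only [aLog_neg, h0, zero_add]
  ring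

/-- Corollary A.5. For the SQG kernel built from `a(k) = −k² log|k|`,
there is `C₂ > 0` such that for all nonzero integers `k₁,…,k₄` summing to zero,
`|S(k₁,k₂,k₃,k₄)| ≤ C₂ |m₃| |m₄| √(log(1+|m₁|) log(1+|m₂|))`, where `(m₁,m₂,m₃,m₄)`
is a decreasing-in-absolute-value rearrangement of the `kᵢ`. -/
theorem statement6 :
    ∃ C : ℝ, 0 < C ∧ ∀ k₁ k₂ k₃ k₄ m₁ m₂ m₃ m₄ : ℤ,
      k₁ ≠ 0 → k₂ ≠ 0 → k₃ ≠ 0 → k₄ ≠ 0 →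
      k₁ + k₂ + k₃ + k₄ = 0 →
      ({m₁, m₂, m₃, m₄} : Multiset ℤ) = ({k₁, k₂, k₃, k₄} : Multiset ℤ) →
      |m₂| ≤ |m₁| → |m₃| ≤ |m₂| → |m₄| ≤ |m₃| →
      |Sker aLog (k₁ : ℝ) (k₂ : ℝ) (k₃ : ℝ) (k₄ : ℝ)|
        ≤ C * |(m₃ : ℝ)| * |(m₄ : ℝ)| *
          Real.sqrt (Real.log (1 + |(m₁ : ℝ)|) * Real.log (1 + |(m₂ : ℝ)|)) := by
  refine ⟨28, by norm_num, ?_⟩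
  intro k₁ k₂ k₃ k₄ m₁ m₂ m₃ m₄ h1 h2 h3 h4 hsum hperm h21 h32 h43
  have hS : Sker aLog (k₁ : ℝ) k₂ k₃ k₄ = Sker aLog (m₁ : ℝ) m₂ m₃ m₄ := by
    rw [Sker_eq_multiset, Sker_eq_multiset, hperm]
  have hm : m₁ + m₂ + m₃ + m₄ = 0 := by
    have := congrArg Multiset.sum hperm
    simp only [Multiset.insert_eq_cons, Multiset.sum_cons, Multiset.sum_singleton] at this
    linarith
  have hm4 : m₄ ≠ 0 := by
    have : m₄ ∈ ({k₁, k₂, k₃, k₄} : Multiset ℤ) := by rw [← hperm]; simp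
    simp only [Multiset.insert_eq_cons, Multiset.mem_cons, Multiset.mem_singleton] at this
    rcases this with h | h | h | h <;> rwa [h]
  have hz : (1 : ℝ) ≤ |(m₄ : ℝ)| := by exact_mod_cast Int.one_le_abs hm4
  have h21 : |(m₂ : ℝ)| ≤ |(m₁ : ℝ)| := by exact_mod_cast h21
  have h32 : |(m₃ : ℝ)| ≤ |(m₂ : ℝ)| := by exact_mod_cast h32
  have h43 : |(m₄ : ℝ)| ≤ |(m₃ : ℝ)| := by exact_mod_cast h43
  rw [hS, Sker_aLog_eq_third_diff (by exact_mod_cast hm)]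
  refine (abs_third_diff_le h32 h43 hz).trans ?_
  have hL2 : Real.log 2 ≤ Real.log (1 + |(m₂ : ℝ)|) :=
    Real.log_le_log (by norm_num) (by linarith)
  have hl2 := Real.log_two_gt_d9
  have hL : Real.log (1 + |(m₂ : ℝ)|) ≤
      Real.sqrt (Real.log (1 + |(m₁ : ℝ)|) * Real.log (1 + |(m₂ : ℝ)|)) := by
    apply Real.le_sqrt_of_sq_le
    have : Real.log (1 + |(m₂ : ℝ)|) ≤ Real.log (1 + |(m₁ : ℝ)|) :=
      Real.log_le_log (by linarith) (by linarith)
    nlinarith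
  -- `3 ≤ 2 ^ 2`, so `log (3 |m₂|) ≤ 2 log 2 + log (1 + |m₂|) ≤ 3 log (1 + |m₂|)`
  have h3x : Real.log (3 * |(m₂ : ℝ)|) ≤ 2 * Real.log 2 + Real.log (1 + |(m₂ : ℝ)|) := by
    have : 2 * Real.log 2 = Real.log 4 := by
      rw [show (4 : ℝ) = 2 ^ 2 by norm_num, Real.log_pow]; norm_num
    rw [this, ← Real.log_mul (by norm_num) (by linarith)]
    exact Real.log_le_log (by linarith) (by linarith)
  have hfin : 2 * Real.log (3 * |(m₂ : ℝ)|) + 5 ≤ 14 * Real.log (1 + |(m₂ : ℝ)|) := by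
    linarith
  calc 2 * |(m₃ : ℝ)| * |(m₄ : ℝ)| * (2 * Real.log (3 * |(m₂ : ℝ)|) + 5)
      ≤ 2 * |(m₃ : ℝ)| * |(m₄ : ℝ)| *
        (14 * Real.sqrt (Real.log (1 + |(m₁ : ℝ)|) * Real.log (1 + |(m₂ : ℝ)|))) := by
        gcongr
        linarith
    _ = _ := by ring
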